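/- Let A be a finite-dimensional algebra over an algebraically closed field. Then the following are equivalent: (1) there exists a positive integer d such that A admits infinitely many pairwise non-isomorphic bricks of k-dimension d; (2) there exists a positive integer d and an infinite family {X_i}_{i∈I} of pairwise non-isomorphic A-modules of k-dimension d such that for every pair of distinct indices i, j ∈ I, either Hom_A(X_i, X_j) = 0 or Hom_A(X_j, X_i) = 0. -/

import Mathlib

universe u v

open Module

/-- A finite-dimensional left module over the `k`-algebra `A`. -/
structure FDMod (k A : Type u) [Field k] [Ring A] [Algebra k A] : Type (u + 1) where
  carrier : Type u
  [addCommGroup : AddCommGroup carrier]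
  [moduleK : Module k carrier]
  [moduleA : Module A carrier]
  [tower : IsScalarTower k A carrier]
  [fd : FiniteDimensional k carrier]

attribute [instance] FDMod.addCommGroup FDMod.moduleK FDMod.moduleA FDMod.tower FDMod.fd

variable {k A : Type u} [Field k] [Ring A] [Algebra k A]

/-- `M` is a brick: `M ≠ 0` and every `A`-endomorphism of `M` is a `k`-scalar,
i.e. `End_A(M) ≅ k`. -/
def FDMod.IsBrick (M : FDMod k A) : Prop :=
  Nontrivial M.carrier ∧ ∀ f : M.carrier →ₗ[A] M.carrier, ∃ c : k, ∀ x : M.carrier, f x = c • x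

/-- `M` and `N` are Hom-orthogonal: `Hom_A(M,N) = 0` and `Hom_A(N,M) = 0`. -/
def FDMod.HomOrth (M N : FDMod k A) : Prop :=
  (∀ f : M.carrier →ₗ[A] N.carrier, f = 0) ∧ (∀ f : N.carrier →ₗ[A] M.carrier, f = 0)

/-- `M` and `N` are isomorphic as `A`-modules. -/
def FDMod.Iso (M N : FDMod k A) : Prop :=
  Nonempty (M.carrier ≃ₗ[A] N.carrier)

/-- A family of modules forms a Hom-orthogonal set: the modules are nonzero,
pairwise non-isomorphic and pairwise Hom-orthogonal. -/
def HomOrthFamily {I : Type v} (X : I → FDMod k A) : Prop :=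
  (∀ i, Nontrivial (X i).carrier) ∧
  (∀ i j, i ≠ j → ¬(X i).Iso (X j)) ∧
  (∀ i j, i ≠ j → (X i).HomOrth (X j))

/-- `A` is brick-finite: there are only finitely many isomorphism classes of bricks. -/
def BrickFinite (k A : Type u) [Field k] [Ring A] [Algebra k A] : Prop :=
  ∃ (m : ℕ) (f : Fin m → FDMod k A), ∀ N : FDMod k A, N.IsBrick → ∃ i, N.Iso (f i)

/-- `A` has rank `n`: there are exactly `n` isomorphism classes of simple modules. -/
def HasRank (k A : Type u) [Field k] [Ring A] [Algebra k A] (n : ℕ) : Prop :=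
  ∃ S : Fin n → FDMod k A,
    (∀ i, IsSimpleModule A (S i).carrier) ∧
    (∀ i j, i ≠ j → ¬(S i).Iso (S j)) ∧
    (∀ T : FDMod k A, IsSimpleModule A T.carrier → ∃ i, T.Iso (S i))

theorem stmt9_schur (B : FDMod k A) [IsAlgClosed k] (hB : Nontrivial B.carrier)
    (h : ∀ g : B.carrier →ₗ[A] B.carrier, g ≠ 0 → Function.Surjective g) : B.IsBrick := by
  refine ⟨hB, fun g => ?_⟩
  obtain ⟨c, hc⟩ := Module.End.exists_eigenvalue (K := k) (g.restrictScalars k)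
  obtain ⟨v, hv⟩ := hc.exists_hasEigenvector
  refine ⟨c, fun x => ?_⟩
  by_contra hx
  let g' : B.carrier →ₗ[A] B.carrier := g - c • LinearMap.id
  have hg' : ∀ y, g' y = g y - c • y := fun y => by simp [g']
  have hne : g' ≠ 0 := by
    intro h0
    apply hx
    have := hg' x
    rw [h0] at this
    exact (sub_eq_zero.mp (by simpa using this.symm))
  have hs := h g' hne
  have hi : Function.Injective (g'.restrictScalars k) :=
    LinearMap.injective_iff_surjective.mpr hs
  apply hv.2
  apply hi
  have h1 : g v = c • v := hv.apply_eq_smul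
  show g' v = g' 0
  rw [hg', h1]
  simp

theorem stmt9_core [IsAlgClosed k] (M : FDMod k A) (hM : Nontrivial M.carrier) :
    ∃ B : FDMod k A, B.IsBrick ∧ (∃ p : M.carrier →ₗ[A] B.carrier, Function.Surjective p) ∧
      (∃ q : B.carrier →ₗ[A] M.carrier, Function.Injective q) := by
  have : IsArtinian A M.carrier := isArtinian_of_tower k inferInstance
  let S : Set (Submodule A M.carrier) :=
    {N | ∃ f : M.carrier →ₗ[A] M.carrier, f ≠ 0 ∧ LinearMap.range f = N}
  have hS : S.Nonempty := ⟨_, LinearMap.id, by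
    intro h0
    obtain ⟨x, hx⟩ := exists_ne (0 : M.carrier)
    exact hx (by simpa using congrArg (fun f => f x) h0), rfl⟩
  obtain ⟨N, ⟨f, hf, hfN⟩, hmin⟩ := WellFounded.has_min
    (wellFounded_lt : WellFounded ((· < ·) : Submodule A M.carrier → _ → Prop)) S hS
  have : FiniteDimensional k N :=
    FiniteDimensional.of_injective (N.subtype.restrictScalars k) N.injective_subtype
  let p : M.carrier →ₗ[A] N := f.codRestrict N (fun x => hfN ▸ LinearMap.mem_range_self f x)
  have hp : Function.Surjective p := by
    rintro ⟨y, hy⟩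
    rw [← hfN] at hy
    obtain ⟨x, rfl⟩ := hy
    exact ⟨x, rfl⟩
  refine ⟨⟨N⟩, stmt9_schur _ ?_ ?_, ⟨p, hp⟩, ⟨N.subtype, N.injective_subtype⟩⟩
  · show Nontrivial N
    rw [Submodule.nontrivial_iff_ne_bot]
    rintro rfl
    exact hf (LinearMap.range_eq_bot.mp hfN)
  · intro g hg
    change N →ₗ[A] N at g
    by_contra hns
    have hlt : LinearMap.range (N.subtype ∘ₗ g ∘ₗ p) < N := by
      refine lt_of_le_of_ne ?_ ?_
      · rintro _ ⟨x, rfl⟩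
        exact (g (p x)).2
      · intro he
        apply hns
        intro y
        have hy : (y : M.carrier) ∈ LinearMap.range (N.subtype ∘ₗ g ∘ₗ p) := he.symm.le y.2
        obtain ⟨x, hx⟩ := hy
        exact ⟨p x, Subtype.ext hx⟩
    refine hmin _ ⟨_, ?_, rfl⟩ hlt
    intro h0
    apply hg
    ext y
    obtain ⟨x, rfl⟩ := hp y
    simpa using congrArg (fun f => f x) h0

theorem FDMod.Iso.finrank_eq {M N : FDMod k A} (h : M.Iso N) :
    finrank k M.carrier = finrank k N.carrier := by
  obtain ⟨e⟩ := h
  exact (e.restrictScalars k).finrank_eq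

/-- isomorphism classes -/
def stmt9_setoid (k A : Type u) [Field k] [Ring A] [Algebra k A] : Setoid (FDMod k A) where
  r := FDMod.Iso
  iseqv := ⟨fun _ => ⟨LinearEquiv.refl _ _⟩, fun ⟨e⟩ => ⟨e.symm⟩, fun ⟨e⟩ ⟨f⟩ => ⟨e.trans f⟩⟩

/-- classes of bricks of dimension `d` -/
def stmt9_cls (k A : Type u) [Field k] [Ring A] [Algebra k A] (d : ℕ) :
    Set (Quotient (stmt9_setoid k A)) :=
  {q | ∃ M : FDMod k A, M.IsBrick ∧ finrank k M.carrier = d ∧ Quotient.mk _ M = q}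

/-- statement (1) for a given `d` -/
def stmt9_P (k A : Type u) [Field k] [Ring A] [Algebra k A] (d : ℕ) : Prop :=
  ∃ (I : Type u) (X : I → FDMod k A), Infinite I ∧
        (∀ i, (X i).IsBrick) ∧ (∀ i j, i ≠ j → ¬(X i).Iso (X j)) ∧
        (∀ i, finrank k (X i).carrier = d)

theorem stmt9_finite (d : ℕ) (h : ¬ stmt9_P k A d) : (stmt9_cls k A d).Finite := by
  by_contra hinf
  have hinf : (stmt9_cls k A d).Infinite := hinf
  let e := hinf.natEmbedding
  choose M hM1 hM2 hM3 using fun n : ℕ => (e n).2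
  refine h ⟨ULift ℕ, fun i => M i.down, inferInstance, fun i => hM1 _, ?_, fun i => hM2 _⟩
  intro i j hij hiso
  apply hij
  have : (e i.down : Quotient (stmt9_setoid k A)) = e j.down := by
    rw [← hM3, ← hM3]
    exact Quotient.sound hiso
  exact ULift.down_injective (e.injective (Subtype.ext this))

theorem stmt9 {k A : Type u} [Field k] [IsAlgClosed k] [Ring A] [Algebra k A]
    [FiniteDimensional k A] :
    (∃ d : ℕ, 0 < d ∧
      ∃ (I : Type u) (X : I → FDMod k A), Infinite I ∧
        (∀ i, (X i).IsBrick) ∧ (∀ i j, i ≠ j → ¬(X i).Iso (X j)) ∧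
        (∀ i, finrank k (X i).carrier = d)) ↔
    (∃ d : ℕ, 0 < d ∧
      ∃ (I : Type u) (X : I → FDMod k A), Infinite I ∧
        (∀ i j, i ≠ j → ¬(X i).Iso (X j)) ∧
        (∀ i, finrank k (X i).carrier = d) ∧
        (∀ i j, i ≠ j →
          (∀ f : (X i).carrier →ₗ[A] (X j).carrier, f = 0) ∨
          (∀ f : (X j).carrier →ₗ[A] (X i).carrier, f = 0))) := by
  classical
  constructor
  · intro hex
    have hex' : ∃ d, 0 < d ∧ stmt9_P k A d := hex
    obtain ⟨hd, I, X, hI, hbr, hniso, hdim⟩ := Nat.find_spec hex'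
    have hmin : ∀ e, e < Nat.find hex' → ¬ (0 < e ∧ stmt9_P k A e) :=
      fun e he => Nat.find_min hex' he
    generalize Nat.find hex' = d at hd hdim hmin
    let T : Set (Quotient (stmt9_setoid k A)) :=
      ⋃ e ∈ Set.Ioo 0 d, stmt9_cls k A e
    have hT : T.Finite := (Set.finite_Ioo 0 d).biUnion fun e he =>
      stmt9_finite e fun h => hmin e he.2 ⟨he.1, h⟩
    have : Finite T := hT
    let F : I → Set T × Set T := fun i =>
      ({t | ∃ B : FDMod k A, Quotient.mk _ B = t.1 ∧
          ∃ p : (X i).carrier →ₗ[A] B.carrier, Function.Surjective p},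
       {t | ∃ B : FDMod k A, Quotient.mk _ B = t.1 ∧
          ∃ p : B.carrier →ₗ[A] (X i).carrier, Function.Injective p})
    obtain ⟨y, hy⟩ := Finite.exists_infinite_fiber F
    refine ⟨d, hd, (F ⁻¹' {y} : Set I), fun i => X i.1, hy, ?_, fun i => hdim _, ?_⟩
    · intro i j hij
      exact hniso _ _ fun h => hij (Subtype.ext h)
    rintro ⟨i, hi⟩ ⟨j, hj⟩ hij
    left
    intro f
    by_contra hf
    have hij' : i ≠ j := fun h => hij (Subtype.ext h)
    change (X i).carrier →ₗ[A] (X j).carrier at f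
    let N := LinearMap.range f
    have : FiniteDimensional k N :=
      FiniteDimensional.of_injective (N.subtype.restrictScalars k) N.injective_subtype
    obtain ⟨B, hB, ⟨p, hp⟩, ⟨q, hq⟩⟩ := stmt9_core (k := k) (A := A) ⟨N⟩ (by
      show Nontrivial N
      rw [Submodule.nontrivial_iff_ne_bot]
      intro h
      exact hf (LinearMap.range_eq_bot.mp h))
    change N →ₗ[A] B.carrier at p
    change B.carrier →ₗ[A] N at q
    have hp' : Function.Surjective (p ∘ₗ f.rangeRestrict) :=
      hp.comp f.surjective_rangeRestrict
    have hq' : Function.Injective (N.subtype ∘ₗ q) := N.injective_subtype.comp hq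
    have hBpos : 0 < finrank k B.carrier := by
      have := hB.1
      exact finrank_pos
    have hBle : finrank k B.carrier ≤ d := by
      rw [← hdim j]
      exact LinearMap.finrank_le_finrank_of_injective
        (f := (N.subtype ∘ₗ q).restrictScalars k) hq'
    have hBlt : finrank k B.carrier < d := by
      refine lt_of_le_of_ne hBle fun he => hniso i j hij' ?_
      have b1 : Function.Injective (p ∘ₗ f.rangeRestrict) :=
        (LinearMap.injective_iff_surjective_of_finrank_eq_finrank
          (f := (p ∘ₗ f.rangeRestrict).restrictScalars k) ((hdim i).trans he.symm)).mpr hp'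
      have b2 : Function.Surjective (N.subtype ∘ₗ q) :=
        (LinearMap.injective_iff_surjective_of_finrank_eq_finrank
          (f := (N.subtype ∘ₗ q).restrictScalars k) (he.trans (hdim j).symm)).mp hq'
      exact ⟨(LinearEquiv.ofBijective _ ⟨b1, hp'⟩).trans (LinearEquiv.ofBijective _ ⟨hq', b2⟩)⟩
    let t : T := ⟨Quotient.mk _ B, by
      simp only [T, Set.mem_iUnion]
      exact ⟨finrank k B.carrier, ⟨hBpos, hBlt⟩, B, hB, rfl, rfl⟩⟩
    have ht1 : t ∈ (F i).1 := ⟨B, rfl, _, hp'⟩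
    have ht2 : t ∈ (F j).2 := ⟨B, rfl, _, hq'⟩
    have hFij : F i = F j := hi.trans hj.symm
    rw [← hFij] at ht2
    obtain ⟨B', hB', q', hq''⟩ := ht2
    obtain ⟨e⟩ : B.Iso B' := Quotient.exact hB'.symm
    obtain ⟨c, hc⟩ := (hbr i).2 (q' ∘ₗ e.toLinearMap ∘ₗ p ∘ₗ f.rangeRestrict)
    have hc0 : c ≠ 0 := by
      rintro rfl
      have := hB.1
      obtain ⟨b, hb⟩ := exists_ne (0 : B.carrier)
      obtain ⟨x, rfl⟩ := hp' b
      have := hc x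
      rw [zero_smul] at this
      apply hb
      apply e.injective
      apply hq''
      rw [map_zero, map_zero]
      exact this
    have hinj : Function.Injective (p ∘ₗ f.rangeRestrict) := by
      intro x x' hxx
      have h1 := hc x
      have h2 := hc x'
      have h3 : c • x = c • x' := by
        rw [← h1, ← h2]
        exact congrArg (fun b => q' (e b)) hxx
      exact smul_right_injective _ hc0 h3
    have := LinearMap.finrank_le_finrank_of_injective
        (f := (p ∘ₗ f.rangeRestrict).restrictScalars k) hinj
    rw [hdim i] at this
    omega
  · rintro ⟨d, hd, I, X, hI, hniso, hdim, hhom⟩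
    have hnt : ∀ i, Nontrivial (X i).carrier := fun i =>
      nontrivial_of_finrank_pos (R := k) (by rw [hdim i]; exact hd)
    choose B hB p hp q hq using fun i =>
      (stmt9_core (X i) (hnt i)).imp fun B h =>
        (⟨h.1, h.2.1.choose, h.2.1.choose_spec, h.2.2.choose, h.2.2.choose_spec⟩ :
          B.IsBrick ∧ ∃ p : (X i).carrier →ₗ[A] B.carrier, Function.Surjective p ∧
            ∃ q : B.carrier →ₗ[A] (X i).carrier, Function.Injective q)
    have key : ∀ i j, (B i).Iso (B j) → ∃ f : (X i).carrier →ₗ[A] (X j).carrier, f ≠ 0 := by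
      rintro i j ⟨e⟩
      refine ⟨q j ∘ₗ e.toLinearMap ∘ₗ p i, fun h0 => ?_⟩
      have := (hB i).1
      obtain ⟨b, hb⟩ := exists_ne (0 : (B i).carrier)
      obtain ⟨x, rfl⟩ := hp i b
      apply hb
      apply e.injective
      apply hq j
      rw [map_zero, map_zero]
      exact congrArg (fun f => f x) h0
    have hBn : ∀ i j, i ≠ j → ¬ (B i).Iso (B j) := by
      intro i j hij hiso
      obtain ⟨f, hf⟩ := key i j hiso
      obtain ⟨g, hg⟩ := key j i ⟨hiso.some.symm⟩
      rcases hhom i j hij with h | h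
      · exact hf (h f)
      · exact hg (h g)
    have hle : ∀ i, finrank k (B i).carrier < d + 1 := fun i => by
      rw [← hdim i, Nat.lt_succ_iff]
      exact LinearMap.finrank_le_finrank_of_injective (f := (q i).restrictScalars k) (hq i)
    obtain ⟨e, he⟩ := Finite.exists_infinite_fiber
      (fun i => (⟨finrank k (B i).carrier, hle i⟩ : Fin (d + 1)))
    have hdim' : ∀ i : ((fun i => (⟨finrank k (B i).carrier, hle i⟩ : Fin (d + 1))) ⁻¹' {e}),
        finrank k (B i.1).carrier = e := fun i => congrArg Fin.val i.2
    refine ⟨e, ?_, _, fun i => B i.1, he, fun i => hB _, ?_, hdim'⟩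
    · obtain ⟨i⟩ := he.nonempty
      rw [← hdim' i]
      have := (hB i.1).1
      exact finrank_pos
    · intro i j hij
      exact hBn _ _ fun h => hij (Subtype.ext h)
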